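/- Saddle-point characterization of limit points (Theorem 4). Let X ⊆ ℝⁿ be nonempty closed convex, θ : ℝⁿ → ℝ and each component gᵢ : ℝⁿ → ℝ differentiable and convex, and α, β, σ > 0. Suppose (x̄, z̄, λ̄, μ̄) ∈ X × ℝᵐ × ℝᵐ₊ × ℝᵐ satisfies: (i) x̄ = P_X[x̄ − σ(∇θ(x̄) + Σᵢ λ̄ᵢ ∇gᵢ(x̄))]; (ii) z̄ = (λ̄ − μ̄)/α; (iii) λ̄ = [μ̄ + (1/β)(g(x̄) − z̄)]⁺ componentwise; (iv) μ̄ = λ̄. Then (x̄, z̄, λ̄, μ̄) is a saddle point of the proximal-perturbed Lagrangian L subject to X, i.e., L(x̄, z̄, λ, μ) ≤ L(x̄, z̄, λ̄, μ̄) ≤ L(x, z, λ̄, μ̄) for all (x, z, λ, μ) ∈ X × ℝᵐ × ℝᵐ × ℝᵐ with λ ∈ ℝᵐ₊. -/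

import Mathlib

open scoped InnerProductSpace
open Filter Topology

/-- The proximal-perturbed Lagrangian (P-Lagrangian)
`L(x, z, λ, μ) = θ(x) + ⟨λ, g(x) − z⟩ + ⟨μ, z⟩ + (α/2)‖z‖² − (β/2)‖λ − μ‖²`. -/
noncomputable def PLag {n m : ℕ} (θ : EuclideanSpace ℝ (Fin n) → ℝ)
    (g : EuclideanSpace ℝ (Fin n) → EuclideanSpace ℝ (Fin m)) (α β : ℝ)
    (x : EuclideanSpace ℝ (Fin n)) (z lam mu : EuclideanSpace ℝ (Fin m)) : ℝ :=
  θ x + ⟪lam, g x - z⟫_ℝ + ⟪mu, z⟫_ℝ + (α / 2) * ‖z‖ ^ 2 - (β / 2) * ‖lam - mu‖ ^ 2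

/-- `(x*, z*, λ*, μ*)` is a saddle point of the P-Lagrangian subject to `X`:
`x* ∈ X`, `λ* ∈ ℝᵐ₊`, and
`L(x*, z*, λ, μ) ≤ L(x*, z*, λ*, μ*) ≤ L(x, z, λ*, μ*)` for all
`(x, z, λ, μ) ∈ X × ℝᵐ × ℝᵐ₊ × ℝᵐ`. -/
def IsSaddlePt {n m : ℕ} (θ : EuclideanSpace ℝ (Fin n) → ℝ)
    (g : EuclideanSpace ℝ (Fin n) → EuclideanSpace ℝ (Fin m)) (α β : ℝ)
    (X : Set (EuclideanSpace ℝ (Fin n)))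
    (xs : EuclideanSpace ℝ (Fin n)) (zs ls ms : EuclideanSpace ℝ (Fin m)) : Prop :=
  xs ∈ X ∧ (∀ i, 0 ≤ ls i) ∧
    (∀ lam mu : EuclideanSpace ℝ (Fin m), (∀ i, 0 ≤ lam i) →
      PLag θ g α β xs zs lam mu ≤ PLag θ g α β xs zs ls ms) ∧
    (∀ x ∈ X, ∀ z : EuclideanSpace ℝ (Fin m),
      PLag θ g α β xs zs ls ms ≤ PLag θ g α β x z ls ms)

/-- `p` is the Euclidean (metric) projection of `u` onto `X`. -/
def IsProjOn {E : Type*} [NormedAddCommGroup E] (X : Set E) (u p : E) : Prop :=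
  p ∈ X ∧ ∀ y ∈ X, ‖u - p‖ ≤ ‖u - y‖

/-- First-order characterization of convexity: a convex function lies above its tangent planes. -/
lemma ConvexOn.add_inner_gradient_le {E : Type*} [NormedAddCommGroup E] [InnerProductSpace ℝ E]
    [CompleteSpace E] {f : E → ℝ} (hf : ConvexOn ℝ Set.univ f) {x : E}
    (hd : DifferentiableAt ℝ f x) (y : E) : f x + ⟪gradient f x, y - x⟫_ℝ ≤ f y := by
  have hline : ConvexOn ℝ Set.univ (f ∘ AffineMap.lineMap (k := ℝ) x y) := by
    simpa using hf.comp_affineMap (AffineMap.lineMap x y)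
  have hderiv : HasDerivAt (f ∘ AffineMap.lineMap (k := ℝ) x y) (fderiv ℝ f x (y - x)) 0 := by
    refine HasFDerivAt.comp_hasDerivAt (0 : ℝ) ?_ AffineMap.hasDerivAt_lineMap
    simpa using hd.hasFDerivAt
  have h := hline.le_slope_of_hasDerivAt (Set.mem_univ 0) (Set.mem_univ 1) one_pos hderiv
  simp only [slope_def_field, Function.comp_apply, AffineMap.lineMap_apply_one,
    AffineMap.lineMap_apply_zero, sub_zero, div_one] at h
  rw [inner_gradient_left]
  linarith

/-- Variational inequality for a metric projection onto a convex set. -/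
lemma IsProjOn.inner_le_zero {E : Type*} [NormedAddCommGroup E] [InnerProductSpace ℝ E]
    {X : Set E} {u p : E} (h : IsProjOn X u p) (hX : Convex ℝ X) {y : E} (hy : y ∈ X) :
    ⟪u - p, y - p⟫_ℝ ≤ 0 := by
  have : Nonempty X := ⟨⟨p, h.1⟩⟩
  refine (norm_eq_iInf_iff_real_inner_le_zero hX h.1).1 (le_antisymm ?_ ?_) y hy
  · exact le_ciInf fun w => h.2 w w.2
  · exact ciInf_le ⟨0, by rintro _ ⟨w, rfl⟩; positivity⟩ (⟨p, h.1⟩ : X)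

/-- A fixed point of the projected gradient step for the Lagrangian of a convex program with
nonnegative multipliers minimizes that Lagrangian over the feasible set. -/
lemma IsProjOn.lagrangian_le {E ι : Type*} [NormedAddCommGroup E] [InnerProductSpace ℝ E]
    [CompleteSpace E] [Fintype ι] {X : Set E} (hX : Convex ℝ X) {θ : E → ℝ} {g : ι → E → ℝ}
    {p : E} (hθd : DifferentiableAt ℝ θ p) (hθc : ConvexOn ℝ Set.univ θ)
    (hgd : ∀ i, DifferentiableAt ℝ (g i) p) (hgc : ∀ i, ConvexOn ℝ Set.univ (g i))
    {l : ι → ℝ} (hl : ∀ i, 0 ≤ l i) {σ : ℝ} (hσ : 0 < σ)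
    (h : IsProjOn X (p - σ • (gradient θ p + ∑ i, l i • gradient (g i) p)) p)
    {y : E} (hy : y ∈ X) : θ p + ∑ i, l i * g i p ≤ θ y + ∑ i, l i * g i y := by
  have hvar := h.inner_le_zero hX hy
  rw [sub_sub_cancel_left, inner_neg_left, real_inner_smul_left, neg_nonpos] at hvar
  have hdir := nonneg_of_mul_nonneg_right hvar hσ
  simp only [inner_add_left, sum_inner, real_inner_smul_left] at hdir
  have hsum : ∑ i, l i * g i p + ∑ i, l i * ⟪gradient (g i) p, y - p⟫_ℝ ≤ ∑ i, l i * g i y := by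
    rw [← Finset.sum_add_distrib]
    refine Finset.sum_le_sum fun i _ => ?_
    rw [← mul_add]
    exact mul_le_mul_of_nonneg_left ((hgc i).add_inner_gradient_le (hgd i) y) (hl i)
  linarith [hθc.add_inner_gradient_le hθd y]

/-- Theorem 4, saddle-point characterization of limit points. If
`(x̄, z̄, λ̄, μ̄)` satisfies the limiting forms of the algorithm's update rules:
(i) `x̄ = P_X[x̄ − σ(∇θ(x̄) + Σᵢ λ̄ᵢ∇gᵢ(x̄))]`, (ii) `z̄ = (λ̄ − μ̄)/α`,
(iii) `λ̄ = [μ̄ + (1/β)(g(x̄) − z̄)]⁺` componentwise, (iv) `μ̄ = λ̄`,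
then it is a saddle point of the P-Lagrangian subject to `X`. -/
theorem limit_point_is_saddle {n m : ℕ}
    (θ : EuclideanSpace ℝ (Fin n) → ℝ)
    (g : EuclideanSpace ℝ (Fin n) → EuclideanSpace ℝ (Fin m))
    (X : Set (EuclideanSpace ℝ (Fin n)))
    (hXne : X.Nonempty) (hXcl : IsClosed X) (hXcv : Convex ℝ X)
    (hθd : Differentiable ℝ θ) (hθc : ConvexOn ℝ Set.univ θ)
    (hgd : ∀ i, Differentiable ℝ (fun x => g x i))
    (hgc : ∀ i, ConvexOn ℝ Set.univ (fun x => g x i))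
    (α β σ : ℝ) (hα : 0 < α) (hβ : 0 < β) (hσ : 0 < σ)
    (xbar : EuclideanSpace ℝ (Fin n)) (zbar lbar mbar : EuclideanSpace ℝ (Fin m))
    (hxbar : xbar ∈ X) (hlbar : ∀ i, 0 ≤ lbar i)
    (hfix : IsProjOn X
      (xbar - σ • (gradient θ xbar + ∑ i, lbar i • gradient (fun y => g y i) xbar)) xbar)
    (hz : zbar = α⁻¹ • (lbar - mbar))
    (hl : ∀ i, lbar i = max 0 (mbar i + β⁻¹ * (g xbar i - zbar i)))
    (hm : mbar = lbar) :
    IsSaddlePt θ g α β X xbar zbar lbar mbar := by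
  subst hm
  have hz0 : zbar = 0 := by simpa using hz
  subst hz0
  have hg : ∀ i, g xbar i ≤ 0 := fun i => by
    have h := (le_max_right _ _).trans_eq (hl i).symm
    simp only [PiLp.zero_apply, sub_zero] at h
    exact nonpos_of_mul_nonpos_right (by linarith) (inv_pos.2 hβ)
  have hslack : ∀ i, mbar i * g xbar i = 0 := fun i => by
    have h := hl i
    simp only [PiLp.zero_apply, sub_zero] at h
    rcases max_choice 0 (mbar i + β⁻¹ * g xbar i) with h0 | h0
    · rw [h, h0, zero_mul]
    · have : β⁻¹ * g xbar i = 0 := by linarith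
      rw [(mul_eq_zero.1 this).resolve_left (inv_ne_zero hβ.ne'), mul_zero]
  have hinner : ∀ v w : EuclideanSpace ℝ (Fin m), ⟪v, w⟫_ℝ = ∑ i, v i * w i := fun v w => by
    simp [PiLp.inner_apply, mul_comm]
  refine ⟨hxbar, hlbar, fun lam mu hlam => ?_, fun x hx z => ?_⟩
  · have h1 : ⟪lam, g xbar⟫_ℝ ≤ 0 := by
      rw [hinner]
      exact Finset.sum_nonpos fun i _ => mul_nonpos_of_nonneg_of_nonpos (hlam i) (hg i)
    have h2 : ⟪mbar, g xbar⟫_ℝ = 0 := by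
      rw [hinner]
      exact Finset.sum_eq_zero fun i _ => hslack i
    have h3 : 0 ≤ β / 2 * ‖lam - mu‖ ^ 2 := by positivity
    simp only [PLag, sub_zero, inner_zero_right, sub_self, norm_zero, h2]
    linarith
  · have h1 := hfix.lagrangian_le hXcv (hθd xbar) hθc (fun i => hgd i xbar) hgc hlbar hσ hx
    rw [← hinner, ← hinner] at h1
    have h2 : 0 ≤ α / 2 * ‖z‖ ^ 2 := by positivity
    simp only [PLag, sub_zero, inner_zero_right, sub_self, norm_zero, inner_sub_right]
    linarith
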